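/- arXiv:1910.09035 — 2 statements merged into one kernel-verified Lean document; each statement's English description precedes it below -/
import Mathlib

section
/- There exists a universal constant C > 0 (independent of the dimension d) with the following property: for every d ≥ 1, every centered, isotropic, log-concave probability measure μ on ℝ^d, and every Brenier map T sending the standard Gaussian measure γ onto μ, one has |T(x)| ≤ C(d + |x|²) for every x ∈ ℝ^d. -/
open MeasureTheory Real
open scoped RealInnerProductSpace ENNReal

noncomputable section

/-- The standard Gaussian measure `γ` on `ℝ^d`, with density
`(2π)^{-d/2} e^{-|x|²/2}` with respect to Lebesgue measure. -/
def stdGaussian (d : ℕ) : Measure (EuclideanSpace ℝ (Fin d)) :=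
  volume.withDensity fun x =>
    ENNReal.ofReal ((2 * π) ^ (-(d : ℝ) / 2) * Real.exp (-‖x‖ ^ 2 / 2))

/-- A probability measure on `ℝ^d` is centered if `∫ x dμ(x) = 0`. -/
def IsCentered {d : ℕ} (μ : Measure (EuclideanSpace ℝ (Fin d))) : Prop :=
  ∫ x, x ∂μ = 0

/-- A probability measure on `ℝ^d` is isotropic if `∫ xᵢ xⱼ dμ(x) = δᵢⱼ`. -/
def IsIsotropic {d : ℕ} (μ : Measure (EuclideanSpace ℝ (Fin d))) : Prop :=
  ∀ i j : Fin d, ∫ x, x i * x j ∂μ = if i = j then 1 else 0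

/-- A measure on `ℝ^d` is log-concave if `μ = e^{-V(x)} dx` for some convex `V`. -/
def IsLogConcave {d : ℕ} (μ : Measure (EuclideanSpace ℝ (Fin d))) : Prop :=
  ∃ V : EuclideanSpace ℝ (Fin d) → ℝ, ConvexOn ℝ Set.univ V ∧
    μ = volume.withDensity fun x => ENNReal.ofReal (Real.exp (-V x))

/-- `T = ∇φ` is a Brenier map sending the standard Gaussian onto `μ` if `φ` is convex,
differentiable, and the pushforward of `γ` under `∇φ` is `μ`. -/
def IsBrenierPotential {d : ℕ} (φ : EuclideanSpace ℝ (Fin d) → ℝ)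
    (μ : Measure (EuclideanSpace ℝ (Fin d))) : Prop :=
  ConvexOn ℝ Set.univ φ ∧ Differentiable ℝ φ ∧
    Measure.map (gradient φ) (stdGaussian d) = μ

/-!
A log-concave measure `e^{-V} dx` on `ℝ^d` whose marginals have second moment at most one puts at
least `3/4` of its mass on each half-space `-2 ≤ ⟪z, u⟫` and at most `1/4` on `2 ≤ ⟪z, u⟫`. A
homothety centred at a distant point `y` moves the first half-space into the second, and convexity
of `V` along the homothety turns the loss of mass into `V y - m ≥ ‖y‖ / 4 - O(d)`, where `m` is a
lower bound of `V`. The case of ratio `1/2` shows that `m` can be chosen with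
`e^{-m/2} ∫ e^{-V/2} = 2 ^ d`, whence `μ (‖y‖ ≥ s) ≤ e^{O(d) - s/8}`.

A Brenier map `T` is monotone, so `‖T‖ ≥ ‖T x‖ / 3` on a ball of radius `√d` centred at distance
`2√d` from `x` in the direction of `T x`. The Gaussian mass of this ball is at least
`e^{-O(d + ‖x‖²)}`; comparing it with the tail of `μ` at `s = ‖T x‖ / 3` gives the bound.
-/

section ExponentialBounds

theorem exp_neg_two_mul_le_one_sub {l : ℝ} (hl₀ : 0 ≤ l) (hl₁ : l ≤ 1 / 2) :
    Real.exp (-2 * l) ≤ 1 - l := by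
  have hinv : (1 - l)⁻¹ ≤ 1 + 2 * l := by
    rw [inv_le_iff_one_le_mul₀ (by linarith)]
    nlinarith
  rw [← Real.le_log_iff_exp_le (by linarith)]
  linarith [Real.one_sub_inv_le_log_of_pos (show 0 < 1 - l by linarith)]

theorem inv_one_sub_pow_le_exp {l : ℝ} (hl₀ : 0 ≤ l) (hl₁ : l ≤ 1 / 2) (n : ℕ) :
    ((1 - l) ^ n)⁻¹ ≤ Real.exp (2 * l * n) := by
  have hpow : Real.exp (-(2 * l * n)) ≤ (1 - l) ^ n :=
    calc Real.exp (-(2 * l * n)) = Real.exp (-2 * l) ^ n := by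
          rw [← Real.exp_nat_mul]
          ring_nf
      _ ≤ (1 - l) ^ n := pow_le_pow_left₀ (Real.exp_pos _).le (exp_neg_two_mul_le_one_sub hl₀ hl₁) n
  rw [inv_le_comm₀ (pow_pos (by linarith) n) (Real.exp_pos _), ← Real.exp_neg]
  exact hpow

theorem two_pow_le_exp (n : ℕ) : (2 : ℝ) ^ n ≤ Real.exp n := by
  rw [← mul_one (n : ℝ), Real.exp_nat_mul]
  exact pow_le_pow_left₀ two_pos.le (by linarith [Real.exp_one_gt_two]) n

theorem exp_neg_le_two_pi_rpow_mul_two_pow (n : ℕ) :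
    Real.exp (-n) ≤ (2 * π) ^ (-(n : ℝ) / 2) * 2 ^ n := by
  have hsqrt : (2 * π) ^ (-(n : ℝ) / 2) = (√(2 * π) ^ n)⁻¹ := by
    rw [neg_div, Real.rpow_neg (by positivity), Real.sqrt_eq_rpow, ← Real.rpow_natCast,
      ← Real.rpow_mul (by positivity), one_div_mul_eq_div]
  have hbase : √(2 * π) ≤ 2 * Real.exp 1 := by
    rw [Real.sqrt_le_left (by positivity)]
    nlinarith [Real.exp_one_gt_two, Real.pi_lt_four]
  have hpow : √(2 * π) ^ n ≤ 2 ^ n * Real.exp n := by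
    rw [← mul_one (n : ℝ), Real.exp_nat_mul, ← mul_pow]
    exact pow_le_pow_left₀ (by positivity) hbase n
  rwa [hsqrt, Real.exp_neg, inv_mul_eq_div, le_div_iff₀ (by positivity),
    inv_mul_le_iff₀ (Real.exp_pos _), mul_comm (Real.exp _)]

theorem lintegral_ofReal_exp_ne_zero {α : Type*} [MeasurableSpace α] {ν : Measure α} [NeZero ν]
    {f : α → ℝ} (hf : Measurable f) : ∫⁻ a, ENNReal.ofReal (Real.exp (f a)) ∂ν ≠ 0 := by
  have hsupp : (Function.support fun a => ENNReal.ofReal (Real.exp (f a))) = Set.univ :=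
    Set.eq_univ_of_forall fun a => by simp [Real.exp_pos]
  rw [← pos_iff_ne_zero, lintegral_pos_iff_support (by fun_prop), hsupp]
  exact NeZero.pos _

end ExponentialBounds

section MonotoneMaps

variable {F : Type*} [NormedAddCommGroup F] [InnerProductSpace ℝ F]

theorem inner_gradient_sub_le [CompleteSpace F] {φ : F → ℝ} {x : F}
    (hφ : ConvexOn ℝ Set.univ φ) (hx : DifferentiableAt ℝ φ x) (y : F) :
    ⟪gradient φ x, y - x⟫ ≤ φ y - φ x := by
  have hline : ConvexOn ℝ Set.univ (φ ∘ AffineMap.lineMap (k := ℝ) x y) := by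
    simpa using hφ.comp_affineMap (AffineMap.lineMap (k := ℝ) x y)
  have hderiv : HasDerivAt (φ ∘ AffineMap.lineMap (k := ℝ) x y) ⟪gradient φ x, y - x⟫ 0 := by
    have hfd : HasFDerivAt φ (fderiv ℝ φ x) (AffineMap.lineMap (k := ℝ) x y 0) := by
      simpa using hx.hasFDerivAt
    have hcomp := hfd.comp_hasDerivAt (0 : ℝ) AffineMap.hasDerivAt_lineMap
    rwa [← toDual_gradient, InnerProductSpace.toDual_apply_apply] at hcomp
  simpa [slope_def_field] using
    hline.le_slope_of_hasDerivAt (Set.mem_univ 0) (Set.mem_univ 1) zero_lt_one hderiv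

theorem inner_gradient_sub_gradient_nonneg [CompleteSpace F] {φ : F → ℝ}
    (hφ : ConvexOn ℝ Set.univ φ) (hdiff : Differentiable ℝ φ) (x y : F) :
    0 ≤ ⟪gradient φ y - gradient φ x, y - x⟫ := by
  have hxy := inner_gradient_sub_le hφ (hdiff x) y
  have hyx := inner_gradient_sub_le hφ (hdiff y) x
  rw [← neg_sub, inner_neg_right] at hyx
  rw [inner_sub_left]
  linarith

theorem exists_forall_mem_closedBall_norm_le_three_mul {T : F → F}
    (hT : ∀ x y, 0 ≤ ⟪T y - T x, y - x⟫) (x : F) {r : ℝ} (hr : 0 < r) :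
    ∃ c, ‖c - x‖ ≤ 2 * r ∧ ∀ z ∈ Metric.closedBall c r, ‖T x‖ ≤ 3 * ‖T z‖ := by
  rcases eq_or_ne (T x) 0 with hTx | hTx
  · exact ⟨x, by simpa using hr.le, fun z _ => by simp [hTx]⟩
  have hpos : 0 < ‖T x‖ := norm_pos_iff.2 hTx
  -- Moving from `x` in the direction of `T x` can only increase the component of `T` along it.
  set h : F := (2 * r / ‖T x‖) • T x with h_def
  have hnorm : ‖h‖ = 2 * r := by
    rw [h_def, norm_smul, Real.norm_of_nonneg (by positivity), div_mul_cancel₀ _ hpos.ne']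
  have hinner : ⟪T x, h⟫ = 2 * r * ‖T x‖ := by
    rw [h_def, inner_smul_right, real_inner_self_eq_norm_sq]
    field_simp
  refine ⟨x + h, by simp [hnorm], fun z hz => ?_⟩
  have hzc : ‖z - (x + h)‖ ≤ r := mem_closedBall_iff_norm.1 hz
  have hsplit : z - x = h + (z - (x + h)) := by abel
  have hzx : ‖z - x‖ ≤ 3 * r := by
    rw [hsplit]
    linarith [norm_add_le h (z - (x + h))]
  have hlower : r * ‖T x‖ ≤ ⟪T x, z - x⟫ := by
    rw [hsplit, inner_add_right, hinner]
    nlinarith [neg_le_of_abs_le (abs_real_inner_le_norm (T x) (z - (x + h)))]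
  have hupper : ⟪T x, z - x⟫ ≤ ‖T z‖ * (3 * r) :=
    calc ⟪T x, z - x⟫ ≤ ⟪T z, z - x⟫ := by
          simpa [inner_sub_left] using hT x z
      _ ≤ ‖T z‖ * ‖z - x‖ := real_inner_le_norm _ _
      _ ≤ ‖T z‖ * (3 * r) := by gcongr
  exact le_of_mul_le_mul_left (by linarith) hr

end MonotoneMaps

section Gibbs

variable {E : Type*} [NormedAddCommGroup E] [NormedSpace ℝ E] [FiniteDimensional ℝ E]
  [MeasurableSpace E] [BorelSpace E]

theorem lintegral_comp_add_smul (ν : Measure E) [ν.IsAddHaarMeasure] (a : E) {s : ℝ} (hs : 0 < s)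
    {g : E → ℝ≥0∞} (hg : Measurable g) :
    ∫⁻ z, g (a + s • z) ∂ν =
      ENNReal.ofReal ((s ^ Module.finrank ℝ E)⁻¹) * ∫⁻ w, g w ∂ν := by
  have hmap : ∫⁻ z, g (a + s • z) ∂ν = ∫⁻ w, g (a + w) ∂(ν.map (s • ·)) := by
    rw [lintegral_map (by fun_prop) (by fun_prop)]
  rw [hmap, Measure.map_addHaar_smul _ hs.ne', lintegral_smul_measure, lintegral_add_left_eq_self,
    abs_of_pos (by positivity), smul_eq_mul]

/-- The measure `e^{-V} dν` with potential `V`; for convex `V` it is log-concave. -/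
def gibbsMeasure (ν : Measure E) (V : E → ℝ) : Measure E :=
  ν.withDensity fun x => ENNReal.ofReal (Real.exp (-V x))

variable {ν : Measure E} [ν.IsAddHaarMeasure] {V : E → ℝ}

theorem measurable_of_convexOn_univ (hV : ConvexOn ℝ Set.univ V) : Measurable V :=
  (continuousOn_univ.1 (hV.continuousOn isOpen_univ)).measurable

/-- Integrated over `z`, this is `f (l y + (1 - l) z) ≥ f(y) ^ l * f(z) ^ (1 - l)` for the density
`f = e^{-V}`, the Jacobian of `z ↦ l y + (1 - l) z` being `(1 - l) ^ d`. -/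
theorem exp_mul_setLIntegral_exp_le_gibbsMeasure (hV : ConvexOn ℝ Set.univ V) {l : ℝ}
    (hl₀ : 0 ≤ l) (hl₁ : l < 1) {y : E} {A B : Set E} (hB : MeasurableSet B)
    (hAB : ∀ z ∈ A, l • y + (1 - l) • z ∈ B) :
    ENNReal.ofReal (Real.exp (-(l * V y))) *
        ∫⁻ z in A, ENNReal.ofReal (Real.exp (-((1 - l) * V z))) ∂ν ≤
      ENNReal.ofReal (((1 - l) ^ Module.finrank ℝ E)⁻¹) * gibbsMeasure ν V B := by
  have hVm := measurable_of_convexOn_univ hV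
  set f : E → ℝ≥0∞ := fun x => ENNReal.ofReal (Real.exp (-V x))
  have hf : Measurable f := by fun_prop
  have hfB : Measurable (B.indicator f) := hf.indicator hB
  have hpoint : ∀ z ∈ A, ENNReal.ofReal (Real.exp (-(l * V y))) *
      ENNReal.ofReal (Real.exp (-((1 - l) * V z))) ≤ B.indicator f (l • y + (1 - l) • z) := by
    intro z hz
    have hconv : V (l • y + (1 - l) • z) ≤ l * V y + (1 - l) * V z :=
      hV.2 (Set.mem_univ y) (Set.mem_univ z) hl₀ (sub_nonneg.2 hl₁.le) (by ring)
    rw [Set.indicator_of_mem (hAB z hz), ← ENNReal.ofReal_mul (Real.exp_pos _).le, ← Real.exp_add]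
    exact ENNReal.ofReal_le_ofReal (Real.exp_le_exp.2 (by linarith))
  calc _ = ∫⁻ z in A, ENNReal.ofReal (Real.exp (-(l * V y))) *
            ENNReal.ofReal (Real.exp (-((1 - l) * V z))) ∂ν :=
        (lintegral_const_mul _ (by fun_prop)).symm
    _ ≤ ∫⁻ z in A, B.indicator f (l • y + (1 - l) • z) ∂ν :=
        setLIntegral_mono (by fun_prop) hpoint
    _ ≤ ∫⁻ z, B.indicator f (l • y + (1 - l) • z) ∂ν := setLIntegral_le_lintegral _ _
    _ = _ := by
        rw [lintegral_comp_add_smul ν _ (sub_pos.2 hl₁) hfB, lintegral_indicator hB,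
          ← withDensity_apply _ hB, gibbsMeasure]

theorem exp_neg_half_mul_lintegral_le [IsProbabilityMeasure (gibbsMeasure ν V)]
    (hV : ConvexOn ℝ Set.univ V) (y : E) :
    ENNReal.ofReal (Real.exp (-V y / 2)) * ∫⁻ z, ENNReal.ofReal (Real.exp (-V z / 2)) ∂ν ≤
      ENNReal.ofReal (2 ^ Module.finrank ℝ E) := by
  have h := exp_mul_setLIntegral_exp_le_gibbsMeasure (ν := ν) hV (l := 1 / 2) (y := y)
    (A := Set.univ) (by norm_num) (by norm_num) MeasurableSet.univ fun _ _ => Set.mem_univ _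
  rw [measure_univ, mul_one, setLIntegral_univ, ← inv_pow] at h
  convert h using 7 <;> ring

theorem exists_le_and_exp_mul_lintegral_eq [IsProbabilityMeasure (gibbsMeasure ν V)]
    (hV : ConvexOn ℝ Set.univ V) :
    ∃ m : ℝ, (∀ x, m ≤ V x) ∧
      ENNReal.ofReal (Real.exp (-m / 2)) * ∫⁻ z, ENNReal.ofReal (Real.exp (-V z / 2)) ∂ν =
        ENNReal.ofReal (2 ^ Module.finrank ℝ E) := by
  have hbound := exp_neg_half_mul_lintegral_le (ν := ν) hV
  set I := ∫⁻ z, ENNReal.ofReal (Real.exp (-V z / 2)) ∂ν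
  have hI₀ : I ≠ 0 :=
    lintegral_ofReal_exp_ne_zero ((measurable_of_convexOn_univ hV).neg.div_const 2)
  have hI : I ≠ ∞ := by
    intro htop
    have h := hbound 0
    rw [htop, ENNReal.mul_top (by simp [Real.exp_pos])] at h
    exact ENNReal.ofReal_ne_top (top_le_iff.1 h)
  have hIpos : 0 < I.toReal := ENNReal.toReal_pos hI₀ hI
  rw [← ENNReal.ofReal_toReal hI] at hbound ⊢
  refine ⟨-2 * Real.log (2 ^ Module.finrank ℝ E / I.toReal), fun y => ?_, ?_⟩
  · have h := hbound y
    rw [← ENNReal.ofReal_mul (Real.exp_pos _).le, ENNReal.ofReal_le_ofReal_iff (by positivity),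
      ← le_div_iff₀ hIpos, ← Real.le_log_iff_exp_le (by positivity)] at h
    linarith
  · rw [neg_mul, neg_neg, mul_div_cancel_left₀ _ two_ne_zero, Real.exp_log (by positivity),
      ← ENNReal.ofReal_mul (by positivity), div_mul_cancel₀ _ hIpos.ne']

theorem exp_mul_measureReal_le_of_homothety [IsFiniteMeasure (gibbsMeasure ν V)]
    (hV : ConvexOn ℝ Set.univ V) {m : ℝ} (hm : ∀ x, m ≤ V x) {l : ℝ} (hl₀ : 0 ≤ l) (hl₁ : l < 1)
    {y : E} {A B : Set E} (hA : MeasurableSet A) (hB : MeasurableSet B)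
    (hAB : ∀ z ∈ A, l • y + (1 - l) • z ∈ B) :
    Real.exp (-(l * (V y - m))) * (gibbsMeasure ν V).real A ≤
      ((1 - l) ^ Module.finrank ℝ E)⁻¹ * (gibbsMeasure ν V).real B := by
  have hVm := measurable_of_convexOn_univ hV
  have hpow : 0 < (1 - l) ^ Module.finrank ℝ E := pow_pos (sub_pos.2 hl₁) _
  have h : ENNReal.ofReal (Real.exp (-(l * (V y - m)))) * gibbsMeasure ν V A ≤
      ENNReal.ofReal (((1 - l) ^ Module.finrank ℝ E)⁻¹) * gibbsMeasure ν V B := by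
    refine le_trans ?_ (exp_mul_setLIntegral_exp_le_gibbsMeasure hV hl₀ hl₁ hB hAB)
    rw [gibbsMeasure, withDensity_apply _ hA, ← lintegral_const_mul _ (by fun_prop),
      ← lintegral_const_mul _ (by fun_prop)]
    refine lintegral_mono fun z => ?_
    rw [← ENNReal.ofReal_mul (Real.exp_pos _).le, ← ENNReal.ofReal_mul (Real.exp_pos _).le,
      ← Real.exp_add, ← Real.exp_add]
    refine ENNReal.ofReal_le_ofReal (Real.exp_le_exp.2 ?_)
    linarith [mul_le_mul_of_nonneg_left (hm z) hl₀]
  have hreal := ENNReal.toReal_mono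
    (ENNReal.mul_ne_top ENNReal.ofReal_ne_top (measure_ne_top _ _)) h
  rwa [ENNReal.toReal_mul, ENNReal.toReal_mul, ENNReal.toReal_ofReal (Real.exp_pos _).le,
    ENNReal.toReal_ofReal (inv_pos.2 hpow).le] at hreal

/-- The masses of `A` and `B` differ by a factor `3 > e`, hence the `1`. -/
theorem one_le_mul_potential_sub_add_finrank [IsFiniteMeasure (gibbsMeasure ν V)]
    (hV : ConvexOn ℝ Set.univ V) {m : ℝ} (hm : ∀ x, m ≤ V x) {l : ℝ} (hl₀ : 0 ≤ l)
    (hl₁ : l ≤ 1 / 2) {y : E} {A B : Set E} (hA : MeasurableSet A) (hB : MeasurableSet B)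
    (hAB : ∀ z ∈ A, l • y + (1 - l) • z ∈ B)
    (hμA : 3 / 4 ≤ (gibbsMeasure ν V).real A) (hμB : (gibbsMeasure ν V).real B ≤ 1 / 4) :
    1 ≤ l * (V y - m + 2 * Module.finrank ℝ E) := by
  have hmass : Real.exp (-(l * (V y - m))) * (3 / 4) ≤
      Real.exp (2 * l * Module.finrank ℝ E) * (1 / 4) :=
    calc _ ≤ Real.exp (-(l * (V y - m))) * (gibbsMeasure ν V).real A := by gcongr
      _ ≤ ((1 - l) ^ Module.finrank ℝ E)⁻¹ * (gibbsMeasure ν V).real B :=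
          exp_mul_measureReal_le_of_homothety hV hm hl₀ (by linarith) hA hB hAB
      _ ≤ _ := by
          gcongr
          exact inv_one_sub_pow_le_exp hl₀ hl₁ _
  have hexp : Real.exp (1 - l * (V y - m)) ≤ Real.exp (2 * l * Module.finrank ℝ E) := by
    rw [sub_eq_add_neg, Real.exp_add]
    nlinarith [Real.exp_one_lt_three, Real.exp_pos (-(l * (V y - m)))]
  linarith [Real.exp_le_exp.1 hexp]

end Gibbs

section Subisotropic

variable {E : Type*} [NormedAddCommGroup E] [InnerProductSpace ℝ E] [MeasurableSpace E]
  [BorelSpace E]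

/-- All one-dimensional marginals of `μ` have second moment at most one: the one-sided relaxation
of isotropy. The integral is the extended nonnegative one, so that integrability is part of the
condition. -/
def IsSubisotropic (μ : Measure E) : Prop :=
  ∀ u : E, ‖u‖ = 1 → ∫⁻ z, ENNReal.ofReal (⟪z, u⟫ ^ 2) ∂μ ≤ 1

theorem IsIsotropic.integrable_mul {d : ℕ} {μ : Measure (EuclideanSpace ℝ (Fin d))}
    (hμ : IsIsotropic μ) (i j : Fin d) : Integrable (fun z => z i * z j) μ := by
  have hL2 (k : Fin d) : MemLp (fun z : EuclideanSpace ℝ (Fin d) => z k) 2 μ := by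
    rw [memLp_two_iff_integrable_sq (by fun_prop)]
    exact integrable_of_integral_eq_one (by simpa [sq] using hμ k k)
  exact (hL2 i).integrable_mul (hL2 j)

theorem IsIsotropic.isSubisotropic {d : ℕ} {μ : Measure (EuclideanSpace ℝ (Fin d))}
    (hμ : IsIsotropic μ) : IsSubisotropic μ := by
  intro u hu
  have hexpand (z : EuclideanSpace ℝ (Fin d)) :
      ⟪z, u⟫ ^ 2 = ∑ i, ∑ j, (u i * u j) * (z i * z j) := by
    rw [sq, PiLp.inner_apply, Finset.sum_mul_sum]
    refine Finset.sum_congr rfl fun i _ => Finset.sum_congr rfl fun j _ => ?_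
    simp only [RCLike.inner_apply, conj_trivial]
    ring
  have hterm (i j : Fin d) : Integrable (fun z => (u i * u j) * (z i * z j)) μ :=
    (hμ.integrable_mul i j).const_mul _
  have hrow (i : Fin d) : Integrable (fun z => ∑ j, (u i * u j) * (z i * z j)) μ :=
    integrable_finsetSum _ fun j _ => hterm i j
  have hint : Integrable (fun z => ⟪z, u⟫ ^ 2) μ := by
    simpa only [hexpand] using integrable_finsetSum _ fun i _ => hrow i
  have hone : ∫ z, ⟪z, u⟫ ^ 2 ∂μ = 1 := by
    simp_rw [hexpand, integral_finsetSum _ fun i _ => hrow i,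
      integral_finsetSum _ fun j _ => hterm _ j, integral_const_mul, hμ _ _]
    simpa [hu, sq] using (EuclideanSpace.real_norm_sq_eq u).symm
  rw [← ofReal_integral_eq_lintegral_ofReal hint (ae_of_all _ fun z => sq_nonneg _), hone,
    ENNReal.ofReal_one]

theorem IsSubisotropic.measureReal_le_inner_le {μ : Measure E} (hμ : IsSubisotropic μ) {u : E}
    (hu : ‖u‖ = 1) {r : ℝ} (hr : 0 < r) : μ.real {z | r ≤ ⟪z, u⟫} ≤ 1 / r ^ 2 := by
  have hr2 : 0 < r ^ 2 := by positivity
  refine ENNReal.toReal_le_of_le_ofReal (by positivity) ?_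
  calc μ {z | r ≤ ⟪z, u⟫}
      ≤ μ {z | ENNReal.ofReal (r ^ 2) ≤ ENNReal.ofReal (⟪z, u⟫ ^ 2)} :=
        measure_mono fun z hz => ENNReal.ofReal_le_ofReal (pow_le_pow_left₀ hr.le hz 2)
    _ ≤ (∫⁻ z, ENNReal.ofReal (⟪z, u⟫ ^ 2) ∂μ) / ENNReal.ofReal (r ^ 2) :=
        meas_ge_le_lintegral_div (by fun_prop) (by simpa using hr2.ne') ENNReal.ofReal_ne_top
    _ ≤ 1 / ENNReal.ofReal (r ^ 2) := by
        gcongr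
        exact hμ u hu
    _ = ENNReal.ofReal (1 / r ^ 2) := by
        rw [ENNReal.ofReal_div_of_pos hr2, ENNReal.ofReal_one]

theorem IsSubisotropic.one_sub_le_measureReal_neg_le_inner {μ : Measure E} [IsProbabilityMeasure μ]
    (hμ : IsSubisotropic μ) {u : E} (hu : ‖u‖ = 1) {r : ℝ} (hr : 0 < r) :
    1 - 1 / r ^ 2 ≤ μ.real {z | -r ≤ ⟪z, u⟫} := by
  have hmeas : MeasurableSet {z : E | -r ≤ ⟪z, u⟫} := measurableSet_le (by fun_prop) (by fun_prop)
  have hcompl : μ.real {z | -r ≤ ⟪z, u⟫}ᶜ ≤ μ.real {z | r ≤ ⟪z, -u⟫} :=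
    measureReal_mono fun z hz => by
      simp only [Set.mem_compl_iff, Set.mem_ofPred_eq, not_le, inner_neg_right] at hz ⊢
      linarith
  have htail := hμ.measureReal_le_inner_le (norm_neg u ▸ hu) hr
  linarith [probReal_compl_eq_one_sub (μ := μ) hmeas]

variable [FiniteDimensional ℝ E] {ν : Measure E} [ν.IsAddHaarMeasure] {V : E → ℝ}

/-- For `8 ≤ ‖y‖` the homothety of centre `y` and ratio `1 - 4 / ‖y‖` maps the half-space
`-2 ≤ ⟪z, y / ‖y‖⟫` into `2 ≤ ⟪z, y / ‖y‖⟫`. -/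
theorem IsSubisotropic.norm_div_four_sub_le [IsProbabilityMeasure (gibbsMeasure ν V)]
    (hμ : IsSubisotropic (gibbsMeasure ν V)) (hV : ConvexOn ℝ Set.univ V) {m : ℝ}
    (hm : ∀ x, m ≤ V x) (y : E) :
    ‖y‖ / 4 - (2 * Module.finrank ℝ E + 2) ≤ V y - m := by
  rcases lt_or_ge ‖y‖ 8 with hy | hy
  · linarith [hm y, (Nat.cast_nonneg (Module.finrank ℝ E) : (0 : ℝ) ≤ _)]
  have hpos : 0 < ‖y‖ := by linarith
  set u : E := ‖y‖⁻¹ • y with u_def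
  have hu : ‖u‖ = 1 := norm_smul_inv_norm (𝕜 := ℝ) (norm_pos_iff.1 hpos)
  have hyu : ⟪y, u⟫ = ‖y‖ := by
    rw [u_def, inner_smul_right, real_inner_self_eq_norm_sq]
    field_simp
  set l : ℝ := 4 / ‖y‖ with l_def
  have hl₀ : 0 ≤ l := by positivity
  have hl₁ : l ≤ 1 / 2 := by
    rw [l_def, div_le_iff₀ hpos]
    linarith
  have hly : l * ‖y‖ = 4 := div_mul_cancel₀ _ hpos.ne'
  have hshift : ∀ z ∈ {z | -2 ≤ ⟪z, u⟫}, l • y + (1 - l) • z ∈ {z | 2 ≤ ⟪z, u⟫} := by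
    intro z hz
    simp only [Set.mem_ofPred_eq, inner_add_left, real_inner_smul_left, hyu, hly] at hz ⊢
    nlinarith
  have hmeas (r : ℝ) : MeasurableSet {z : E | r ≤ ⟪z, u⟫} :=
    measurableSet_le (by fun_prop) (by fun_prop)
  have hone := one_le_mul_potential_sub_add_finrank (ν := ν) hV hm hl₀ hl₁ (hmeas _) (hmeas _)
    hshift
    (by linarith [hμ.one_sub_le_measureReal_neg_le_inner hu two_pos])
    (by linarith [hμ.measureReal_le_inner_le hu two_pos])
  have hscaled : ‖y‖ ≤ 4 * (V y - m + 2 * Module.finrank ℝ E) := by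
    rwa [l_def, div_mul_eq_mul_div, one_le_div hpos] at hone
  linarith

theorem IsSubisotropic.gibbsMeasure_setOf_le_norm_le [IsProbabilityMeasure (gibbsMeasure ν V)]
    (hμ : IsSubisotropic (gibbsMeasure ν V)) (hV : ConvexOn ℝ Set.univ V) (s : ℝ) :
    gibbsMeasure ν V {y | s ≤ ‖y‖} ≤
      ENNReal.ofReal (Real.exp (2 * Module.finrank ℝ E + 1 - s / 8)) := by
  obtain ⟨m, hm, hI⟩ := exists_le_and_exp_mul_lintegral_eq (ν := ν) hV
  have hVm := measurable_of_convexOn_univ hV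
  set n := Module.finrank ℝ E
  have hS : MeasurableSet {y : E | s ≤ ‖y‖} := measurableSet_le (by fun_prop) (by fun_prop)
  have hdensity : ∀ y ∈ {y : E | s ≤ ‖y‖}, ENNReal.ofReal (Real.exp (-V y)) ≤
      ENNReal.ofReal (Real.exp (n + 1 - s / 8)) *
        (ENNReal.ofReal (Real.exp (-m / 2)) * ENNReal.ofReal (Real.exp (-V y / 2))) := by
    intro y hy
    rw [← ENNReal.ofReal_mul (Real.exp_pos _).le, ← ENNReal.ofReal_mul (Real.exp_pos _).le,
      ← Real.exp_add, ← Real.exp_add]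
    refine ENNReal.ofReal_le_ofReal (Real.exp_le_exp.2 ?_)
    have hnorm : s ≤ ‖y‖ := hy
    linarith [hμ.norm_div_four_sub_le hV hm y]
  calc gibbsMeasure ν V {y | s ≤ ‖y‖}
      = ∫⁻ y in {y | s ≤ ‖y‖}, ENNReal.ofReal (Real.exp (-V y)) ∂ν := withDensity_apply _ hS
    _ ≤ ∫⁻ y in {y | s ≤ ‖y‖}, ENNReal.ofReal (Real.exp (n + 1 - s / 8)) *
          (ENNReal.ofReal (Real.exp (-m / 2)) * ENNReal.ofReal (Real.exp (-V y / 2))) ∂ν :=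
        setLIntegral_mono (by fun_prop) hdensity
    _ ≤ ∫⁻ y, ENNReal.ofReal (Real.exp (n + 1 - s / 8)) *
          (ENNReal.ofReal (Real.exp (-m / 2)) * ENNReal.ofReal (Real.exp (-V y / 2))) ∂ν :=
        setLIntegral_le_lintegral _ _
    _ = ENNReal.ofReal (Real.exp (n + 1 - s / 8) * 2 ^ n) := by
        rw [lintegral_const_mul _ (by fun_prop), lintegral_const_mul _ (by fun_prop), hI,
          ← ENNReal.ofReal_mul (Real.exp_pos _).le]
    _ ≤ ENNReal.ofReal (Real.exp (n + 1 - s / 8) * Real.exp n) := by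
        gcongr
        exact two_pow_le_exp n
    _ = ENNReal.ofReal (Real.exp (2 * n + 1 - s / 8)) := by
        rw [← Real.exp_add]
        ring_nf

end Subisotropic

section Gaussian

variable {d : ℕ}

theorem two_pow_le_volume_closedBall_sqrt (c : EuclideanSpace ℝ (Fin d)) :
    ENNReal.ofReal (2 ^ d) ≤ volume (Metric.closedBall c √d) := by
  have hcube : WithLp.ofLp ⁻¹' Metric.closedBall (WithLp.ofLp c) 1 ⊆ Metric.closedBall c √d := by
    intro x hx
    have hdist : dist x c ≤ √d * dist (WithLp.ofLp x) (WithLp.ofLp c) := by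
      simpa [Real.sqrt_eq_rpow] using
        (PiLp.antilipschitzWith_ofLp 2 fun _ : Fin d => ℝ).le_mul_dist x c
    exact hdist.trans (mul_le_of_le_one_right (Real.sqrt_nonneg _) hx)
  calc ENNReal.ofReal (2 ^ d) = volume (Metric.closedBall (WithLp.ofLp c) 1) := by
        simp [Real.volume_pi_closedBall]
    _ = volume (WithLp.ofLp ⁻¹' Metric.closedBall (WithLp.ofLp c) 1) :=
        ((PiLp.volume_preserving_ofLp (Fin d)).measure_preimage
          measurableSet_closedBall.nullMeasurableSet).symm
    _ ≤ volume (Metric.closedBall c √d) := measure_mono hcube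

theorem ofReal_exp_le_stdGaussian_closedBall_sqrt (c : EuclideanSpace ℝ (Fin d)) :
    ENNReal.ofReal (Real.exp (-d - (‖c‖ + √d) ^ 2 / 2)) ≤
      stdGaussian d (Metric.closedBall c √d) := by
  set R := ‖c‖ + √d
  set κ := (2 * π) ^ (-(d : ℝ) / 2)
  have : 0 < κ := by positivity
  have hdensity : ∀ x ∈ Metric.closedBall c √d, ENNReal.ofReal (κ * Real.exp (-R ^ 2 / 2)) ≤
      ENNReal.ofReal (κ * Real.exp (-‖x‖ ^ 2 / 2)) := by
    intro x hx
    have hxR : ‖x‖ ≤ R := norm_le_of_mem_closedBall hx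
    gcongr
  calc ENNReal.ofReal (Real.exp (-d - R ^ 2 / 2))
      = ENNReal.ofReal (Real.exp (-d) * Real.exp (-R ^ 2 / 2)) := by
        rw [← Real.exp_add]
        ring_nf
    _ ≤ ENNReal.ofReal (κ * 2 ^ d * Real.exp (-R ^ 2 / 2)) := by
        gcongr
        exact exp_neg_le_two_pi_rpow_mul_two_pow d
    _ = ENNReal.ofReal (κ * Real.exp (-R ^ 2 / 2)) * ENNReal.ofReal (2 ^ d) := by
        rw [← ENNReal.ofReal_mul (by positivity), mul_right_comm]
    _ ≤ ENNReal.ofReal (κ * Real.exp (-R ^ 2 / 2)) * volume (Metric.closedBall c √d) := by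
        gcongr
        exact two_pow_le_volume_closedBall_sqrt c
    _ = ∫⁻ _ in Metric.closedBall c √d, ENNReal.ofReal (κ * Real.exp (-R ^ 2 / 2)) :=
        (setLIntegral_const _ _).symm
    _ ≤ ∫⁻ x in Metric.closedBall c √d, ENNReal.ofReal (κ * Real.exp (-‖x‖ ^ 2 / 2)) :=
        setLIntegral_mono (by fun_prop) hdensity
    _ = stdGaussian d (Metric.closedBall c √d) :=
        (withDensity_apply _ measurableSet_closedBall).symm

end Gaussian

theorem IsLogConcave.measure_setOf_le_norm_le {d : ℕ} {μ : Measure (EuclideanSpace ℝ (Fin d))}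
    [IsProbabilityMeasure μ] (hlc : IsLogConcave μ) (hμ : IsSubisotropic μ) (s : ℝ) :
    μ {y | s ≤ ‖y‖} ≤ ENNReal.ofReal (Real.exp (2 * d + 1 - s / 8)) := by
  obtain ⟨V, hV, hμV⟩ := hlc
  obtain rfl : μ = gibbsMeasure volume V := hμV
  simpa using hμ.gibbsMeasure_setOf_le_norm_le hV s

theorem IsBrenierPotential.ofReal_exp_le_measure_setOf_le_norm {d : ℕ}
    {μ : Measure (EuclideanSpace ℝ (Fin d))} [IsProbabilityMeasure μ]
    {φ : EuclideanSpace ℝ (Fin d) → ℝ} (hφ : IsBrenierPotential φ μ)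
    {c : EuclideanSpace ℝ (Fin d)} {s : ℝ}
    (hs : ∀ z ∈ Metric.closedBall c √d, s ≤ ‖gradient φ z‖) :
    ENNReal.ofReal (Real.exp (-d - (‖c‖ + √d) ^ 2 / 2)) ≤ μ {y | s ≤ ‖y‖} := by
  obtain ⟨-, -, hmap⟩ := hφ
  have hae : AEMeasurable (gradient φ) (stdGaussian d) :=
    aemeasurable_of_map_neZero (by rw [hmap]; infer_instance)
  calc _ ≤ stdGaussian d (Metric.closedBall c √d) := ofReal_exp_le_stdGaussian_closedBall_sqrt c
    _ ≤ stdGaussian d (gradient φ ⁻¹' {y | s ≤ ‖y‖}) := measure_mono hs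
    _ = μ {y | s ≤ ‖y‖} := by
        rw [← hmap, Measure.map_apply_of_aemeasurable hae
          (measurableSet_le measurable_const measurable_norm)]

theorem statement_0_general {d : ℕ} {μ : Measure (EuclideanSpace ℝ (Fin d))}
    [IsProbabilityMeasure μ] (hμ : IsSubisotropic μ) (hlc : IsLogConcave μ)
    {φ : EuclideanSpace ℝ (Fin d) → ℝ} (hφ : IsBrenierPotential φ μ)
    (x : EuclideanSpace ℝ (Fin d)) : ‖gradient φ x‖ ≤ 312 * (d + ‖x‖ ^ 2) := by
  rcases Nat.eq_zero_or_pos d with rfl | hd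
  · rw [Subsingleton.elim (gradient φ x) 0, norm_zero]
    positivity
  have hd' : (1 : ℝ) ≤ d := by exact_mod_cast hd
  obtain ⟨c, hc, hball⟩ := exists_forall_mem_closedBall_norm_le_three_mul
    (inner_gradient_sub_gradient_nonneg hφ.1 hφ.2.1) x (r := √d) (by positivity)
  have hmass := (hφ.ofReal_exp_le_measure_setOf_le_norm (s := ‖gradient φ x‖ / 3) fun z hz => by
    linarith [hball z hz]).trans (hlc.measure_setOf_le_norm_le hμ _)
  rw [ENNReal.ofReal_le_ofReal_iff (Real.exp_pos _).le, Real.exp_le_exp] at hmass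
  have hradius : (‖c‖ + √d) ^ 2 ≤ 2 * ‖x‖ ^ 2 + 18 * d :=
    calc (‖c‖ + √d) ^ 2 ≤ (‖x‖ + 3 * √d) ^ 2 :=
          pow_le_pow_left₀ (by positivity) (by linarith [norm_le_norm_add_norm_sub' c x]) 2
      _ ≤ 2 * (‖x‖ ^ 2 + (3 * √d) ^ 2) := add_sq_le
      _ = 2 * ‖x‖ ^ 2 + 18 * d := by
          rw [mul_pow, Real.sq_sqrt d.cast_nonneg]
          ring
  linarith [sq_nonneg ‖x‖]

/-- There exists a universal constant `C > 0` such that for every `d ≥ 1`, every centered,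
isotropic, log-concave probability measure `μ` on `ℝ^d`, and every Brenier map `T = ∇φ`
sending the standard Gaussian onto `μ`, one has `|T(x)| ≤ C (d + |x|²)` for all `x`. -/
theorem statement_0 :
    ∃ C : ℝ, 0 < C ∧ ∀ d : ℕ, 1 ≤ d →
      ∀ μ : Measure (EuclideanSpace ℝ (Fin d)), IsProbabilityMeasure μ →
        IsCentered μ → IsIsotropic μ → IsLogConcave μ →
        ∀ φ : EuclideanSpace ℝ (Fin d) → ℝ, IsBrenierPotential φ μ →
          ∀ x : EuclideanSpace ℝ (Fin d), ‖gradient φ x‖ ≤ C * (d + ‖x‖ ^ 2) :=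
  ⟨312, by norm_num, fun _ _ _ _ _ hiso hlc _ hφ x =>
    statement_0_general hiso.isSubisotropic hlc hφ x⟩
end
end

section
/- Let μ be a centered probability measure on ℝ^d satisfying a Gaussian concentration inequality with constant β > 0, and let T be a Brenier map sending the standard Gaussian measure γ onto μ. Then |T(x)| ≤ 12 β^{-1/2} √(|x|² + 17d) for every x ∈ ℝ^d. -/
open MeasureTheory Real
open scoped RealInnerProductSpace ENNReal

noncomputable section

/-- `μ` satisfies a Gaussian concentration inequality with constant `β`: for every
`1`-Lipschitz `f` and every `r ≥ 0`, `μ({f ≥ ∫ f dμ + r}) ≤ exp(-β r²/2)`. -/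
def GaussianConcentration {d : ℕ} (μ : Measure (EuclideanSpace ℝ (Fin d))) (β : ℝ) : Prop :=
  ∀ f : EuclideanSpace ℝ (Fin d) → ℝ, LipschitzWith 1 f → ∀ r : ℝ, 0 ≤ r →
    μ {x | (∫ y, f y ∂μ) + r ≤ f x} ≤ ENNReal.ofReal (Real.exp (-β * r ^ 2 / 2))

/-!
Write `y = ∇φ x`. Monotonicity of `∇φ` gives `|∇φ z| ≥ |y| / 3` for every `z` in the ball of
radius `ρ = √(5d)` around `a = x + 2ρ y / |y|`. Hence the Gaussian mass of that ball, which is at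
least `exp (-(|a|² + 7d/2))`, is a lower bound for `μ {|w| ≥ |y| / 3}`. Concentration of the norm
turns this into an upper bound for `|y| / 3 - ∫ |w| dμ`. It also bounds the variance of each
coordinate by `4 / β`, so `∫ |w| dμ ≤ √(4d / β)` because `μ` is centered.
-/

section MonotoneGradient

variable {E : Type*} [NormedAddCommGroup E] [InnerProductSpace ℝ E]

lemma inner_gradient_le_sub_of_convexOn [CompleteSpace E] {s : Set E} {φ : E → ℝ}
    (hφ : ConvexOn ℝ s φ) {x z : E} (hx : x ∈ s) (hz : z ∈ s) (hdiff : DifferentiableAt ℝ φ x) :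
    ⟪gradient φ x, z - x⟫ ≤ φ z - φ x := by
  let line : ℝ →ᵃ[ℝ] E := AffineMap.lineMap x z
  have hline_zero : line 0 = x := AffineMap.lineMap_apply_zero x z
  have hline_one : line 1 = z := AffineMap.lineMap_apply_one x z
  have hderiv : HasDerivAt (φ ∘ line) ⟪gradient φ x, z - x⟫ 0 := by
    rw [← hline_zero] at hdiff
    simpa [hline_zero] using
      hdiff.hasGradientAt.hasFDerivAt.comp_hasDerivAt 0 AffineMap.hasDerivAt_lineMap
  have hslope := (hφ.comp_affineMap line).le_slope_of_hasDerivAt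
    (by rwa [Set.mem_preimage, hline_zero]) (by rwa [Set.mem_preimage, hline_one])
    zero_lt_one hderiv
  simpa [slope_def_field, hline_zero, hline_one] using hslope

lemma inner_gradient_le_inner_gradient_of_convexOn [CompleteSpace E] {s : Set E} {φ : E → ℝ}
    (hφ : ConvexOn ℝ s φ) {x z : E} (hx : x ∈ s) (hz : z ∈ s)
    (hdiffx : DifferentiableAt ℝ φ x) (hdiffz : DifferentiableAt ℝ φ z) :
    ⟪gradient φ x, z - x⟫ ≤ ⟪gradient φ z, z - x⟫ := by
  have hxz := inner_gradient_le_sub_of_convexOn hφ hx hz hdiffx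
  have hzx := inner_gradient_le_sub_of_convexOn hφ hz hx hdiffz
  rw [← neg_sub z x, inner_neg_right] at hzx
  linarith

lemma mul_norm_le_mul_norm_of_mem_closedBall {y y' x z : E} {R ρ : ℝ} (hR : 0 ≤ R)
    (hmono : ⟪y, z - x⟫ ≤ ⟪y', z - x⟫)
    (hz : z ∈ Metric.closedBall (x + (R * ‖y‖⁻¹) • y) ρ) :
    (R - ρ) * ‖y‖ ≤ (R + ρ) * ‖y'‖ := by
  set w := z - (x + (R * ‖y‖⁻¹) • y) with hw
  have hw_norm : ‖w‖ ≤ ρ := mem_closedBall_iff_norm.1 hz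
  have hsub : z - x = w + (R * ‖y‖⁻¹) • y := by rw [hw]; abel
  have hscale : R * ‖y‖⁻¹ * ‖y‖ ≤ R := by
    rw [mul_assoc]
    exact mul_le_of_le_one_right hR inv_mul_le_one
  have hnorm : ‖z - x‖ ≤ R + ρ := by
    calc ‖z - x‖ ≤ ‖w‖ + R * ‖y‖⁻¹ * ‖y‖ := by
          rw [hsub]
          refine (norm_add_le _ _).trans_eq ?_
          rw [norm_smul, Real.norm_of_nonneg (by positivity)]
      _ ≤ R + ρ := by linarith
  have hinner_w : -(ρ * ‖y‖) ≤ ⟪y, w⟫ := by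
    have := neg_le_of_abs_le (abs_real_inner_le_norm y w)
    nlinarith [norm_nonneg y]
  calc (R - ρ) * ‖y‖ = -(ρ * ‖y‖) + R * ‖y‖⁻¹ * (‖y‖ * ‖y‖) := by
        rcases eq_or_ne ‖y‖ 0 with h | h
        · simp [h]
        · field_simp
          ring
    _ ≤ ⟪y, z - x⟫ := by
        rw [hsub, inner_add_right, real_inner_smul_self_right]
        gcongr
    _ ≤ ‖y'‖ * ‖z - x‖ := hmono.trans (real_inner_le_norm _ _)
    _ ≤ (R + ρ) * ‖y'‖ := by
        rw [mul_comm]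
        gcongr

lemma measurable_gradient [CompleteSpace E] [MeasurableSpace E] [BorelSpace E]
    (φ : E → ℝ) : Measurable (gradient φ) :=
  (InnerProductSpace.toDual ℝ E).symm.continuous.measurable.comp (measurable_fderiv ℝ φ)

end MonotoneGradient

section GaussianTails

lemma lintegral_Ioi_mul_exp_neg_mul_sq {β : ℝ} (hβ : 0 < β) :
    ∫⁻ t in Set.Ioi (0 : ℝ), ENNReal.ofReal (t * Real.exp (-β * t ^ 2 / 2)) =
      ENNReal.ofReal (1 / β) := by
  have hrpow : ∀ t : ℝ, t * Real.exp (-β * t ^ 2 / 2) =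
      t ^ (1 : ℝ) * Real.exp (-(β / 2) * t ^ (2 : ℝ)) := fun t => by
    rw [rpow_one, rpow_two]
    ring_nf
  simp only [hrpow]
  rw [← ofReal_integral_eq_lintegral_ofReal
      (integrableOn_rpow_mul_exp_neg_mul_rpow (by norm_num) two_pos (by positivity)),
    integral_rpow_mul_exp_neg_mul_rpow two_pos (by norm_num) (by positivity)]
  · norm_num [rpow_neg_one]
  · filter_upwards [ae_restrict_mem measurableSet_Ioi] with t ht
    have : 0 < t := ht
    simp only [Pi.zero_apply]
    positivity

lemma lintegral_enorm_sq_le_of_measure_le_exp {α : Type*} [MeasurableSpace α] {μ : Measure α}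
    {g : α → ℝ} (hg : AEMeasurable g μ) {β : ℝ} (hβ : 0 < β) {C : ℝ≥0∞}
    (htail : ∀ t : ℝ, 0 < t →
      μ {a | t ≤ |g a|} ≤ C * ENNReal.ofReal (Real.exp (-β * t ^ 2 / 2))) :
    ∫⁻ a, ‖g a‖ₑ ^ 2 ∂μ ≤ C * ENNReal.ofReal (2 / β) := by
  have hsq : ∀ a, ‖g a‖ₑ ^ 2 = ENNReal.ofReal (|g a| ^ (2 : ℝ)) := fun a => by
    rw [rpow_two, ENNReal.ofReal_pow (abs_nonneg _), Real.enorm_eq_ofReal_abs]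
  calc ∫⁻ a, ‖g a‖ₑ ^ 2 ∂μ
      = ENNReal.ofReal 2 *
          ∫⁻ t in Set.Ioi (0 : ℝ), μ {a | t ≤ |g a|} * ENNReal.ofReal (t ^ ((2 : ℝ) - 1)) := by
        simp only [hsq]
        exact lintegral_rpow_eq_lintegral_meas_le_mul μ (.of_forall fun a => abs_nonneg _)
          hg.abs two_pos
    _ ≤ ENNReal.ofReal 2 * ∫⁻ t in Set.Ioi (0 : ℝ),
          C * ENNReal.ofReal (t * Real.exp (-β * t ^ 2 / 2)) := by
        gcongr ENNReal.ofReal 2 * ?_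
        refine setLIntegral_mono' measurableSet_Ioi fun t ht => ?_
        rw [mul_comm t, ENNReal.ofReal_mul (by positivity), ← mul_assoc,
          show (2 : ℝ) - 1 = 1 by norm_num, rpow_one]
        gcongr
        exact htail t ht
    _ = C * ENNReal.ofReal (2 / β) := by
        rw [lintegral_const_mul _ (by fun_prop), lintegral_Ioi_mul_exp_neg_mul_sq hβ,
          mul_left_comm, ← ENNReal.ofReal_mul two_pos.le, mul_one_div]

end GaussianTails

lemma lipschitzWith_one_euclideanSpace_apply {ι : Type*} [Fintype ι] (i : ι) :
    LipschitzWith 1 fun x : EuclideanSpace ℝ ι => x i :=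
  LipschitzWith.mk_one fun x y => by
    simpa only [dist_eq_norm, PiLp.sub_apply] using PiLp.norm_apply_le (x - y) i

namespace GaussianConcentration

variable {d : ℕ} {μ : Measure (EuclideanSpace ℝ (Fin d))} {β : ℝ}
  {f : EuclideanSpace ℝ (Fin d) → ℝ}

lemma measure_le_abs_sub_integral_le (hconc : GaussianConcentration μ β)
    (hf : LipschitzWith 1 f) {t : ℝ} (ht : 0 ≤ t) :
    μ {x | t ≤ |f x - ∫ y, f y ∂μ|} ≤ 2 * ENNReal.ofReal (Real.exp (-β * t ^ 2 / 2)) := by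
  have hsubset : {x | t ≤ |f x - ∫ y, f y ∂μ|} ⊆
      {x | (∫ y, f y ∂μ) + t ≤ f x} ∪ {x | (∫ y, -f y ∂μ) + t ≤ -f x} := by
    intro x hx
    rw [integral_neg]
    rcases le_abs.1 hx.out with h | h
    · exact Or.inl (le_sub_iff_add_le'.1 h)
    · exact Or.inr (by change -_ + t ≤ -f x; linarith)
  calc μ {x | t ≤ |f x - ∫ y, f y ∂μ|}
      ≤ μ {x | (∫ y, f y ∂μ) + t ≤ f x} + μ {x | (∫ y, -f y ∂μ) + t ≤ -f x} :=
        (measure_mono hsubset).trans (measure_union_le _ _)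
    _ ≤ 2 * ENNReal.ofReal (Real.exp (-β * t ^ 2 / 2)) := by
        rw [two_mul]
        exact add_le_add (hconc f hf t ht) (hconc (fun x => -f x) hf.neg t ht)

lemma evariance_le (hconc : GaussianConcentration μ β) (hβ : 0 < β) (hf : LipschitzWith 1 f) :
    ProbabilityTheory.evariance f μ ≤ ENNReal.ofReal (4 / β) := by
  calc ProbabilityTheory.evariance f μ
      ≤ 2 * ENNReal.ofReal (2 / β) :=
        lintegral_enorm_sq_le_of_measure_le_exp
          (hf.continuous.measurable.sub_const _).aemeasurable hβ
          fun _ ht => hconc.measure_le_abs_sub_integral_le hf ht.le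
    _ = ENNReal.ofReal (4 / β) := by
        rw [← ENNReal.ofReal_ofNat 2, ← ENNReal.ofReal_mul two_pos.le]
        ring_nf

/- `∫ f` is the junk value `0` when `f` is not integrable, but the two-sided tail bound around
whatever value it takes already forces square integrability. -/
lemma memLp_two [IsFiniteMeasure μ] (hconc : GaussianConcentration μ β) (hβ : 0 < β)
    (hf : LipschitzWith 1 f) : MemLp f 2 μ :=
  (ProbabilityTheory.evariance_lt_top_iff_memLp hf.continuous.aestronglyMeasurable).1
    ((hconc.evariance_le hβ hf).trans_lt ENNReal.ofReal_lt_top)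

lemma variance_le (hconc : GaussianConcentration μ β) (hβ : 0 < β) (hf : LipschitzWith 1 f) :
    ProbabilityTheory.variance f μ ≤ 4 / β :=
  ENNReal.toReal_le_of_le_ofReal (by positivity) (hconc.evariance_le hβ hf)

lemma integral_apply_sq_le [IsProbabilityMeasure μ] (hconc : GaussianConcentration μ β)
    (hβ : 0 < β) (hcent : IsCentered μ) (i : Fin d) : ∫ x, x i ^ 2 ∂μ ≤ 4 / β := by
  have hLp (j : Fin d) : MemLp (fun x : EuclideanSpace ℝ (Fin d) => x j) 2 μ :=
    hconc.memLp_two hβ (lipschitzWith_one_euclideanSpace_apply j)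
  have hmean : ∫ x, x i ∂μ = 0 := by
    rw [← eval_integral_piLp fun j => (hLp j).integrable one_le_two, hcent]
    rfl
  have hvar := ProbabilityTheory.variance_eq_sub (hLp i)
  rw [hmean, zero_pow two_ne_zero, sub_zero] at hvar
  exact hvar.symm.trans_le (hconc.variance_le hβ (lipschitzWith_one_euclideanSpace_apply i))

lemma integral_norm_sq_le [IsProbabilityMeasure μ] (hconc : GaussianConcentration μ β)
    (hβ : 0 < β) (hcent : IsCentered μ) : ∫ x, ‖x‖ ^ 2 ∂μ ≤ 4 * d / β := by
  calc ∫ x, ‖x‖ ^ 2 ∂μ = ∑ i, ∫ x, x i ^ 2 ∂μ := by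
        simp only [EuclideanSpace.real_norm_sq_eq]
        exact integral_finsetSum _ fun i _ =>
          (hconc.memLp_two hβ (lipschitzWith_one_euclideanSpace_apply i)).integrable_sq
    _ ≤ ∑ _i : Fin d, 4 / β :=
        Finset.sum_le_sum fun i _ => hconc.integral_apply_sq_le hβ hcent i
    _ = 4 * d / β := by
        rw [Finset.sum_const, Finset.card_fin, nsmul_eq_mul]
        ring

lemma integral_norm_le [IsProbabilityMeasure μ] (hconc : GaussianConcentration μ β)
    (hβ : 0 < β) (hcent : IsCentered μ) : ∫ x, ‖x‖ ∂μ ≤ √(4 * d / β) := by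
  have hvar : 0 ≤ (∫ x, ‖x‖ ^ 2 ∂μ) - (∫ x, ‖x‖ ∂μ) ^ 2 :=
    (ProbabilityTheory.variance_nonneg _ μ).trans_eq
      (ProbabilityTheory.variance_eq_sub (hconc.memLp_two hβ lipschitzWith_one_norm))
  exact Real.le_sqrt_of_sq_le ((sub_nonneg.1 hvar).trans (hconc.integral_norm_sq_le hβ hcent))

lemma le_integral_add_sqrt_of_exp_le_measure (hconc : GaussianConcentration μ β) (hβ : 0 < β)
    (hf : LipschitzWith 1 f) {c t : ℝ}
    (hmass : ENNReal.ofReal (Real.exp (-t)) ≤ μ {x | c ≤ f x}) :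
    c ≤ (∫ x, f x ∂μ) + √(2 * t / β) := by
  by_contra! hc
  set r := c - ∫ x, f x ∂μ with hr
  have hsqrt : √(2 * t / β) < r := by linarith
  have hr_nonneg : 0 ≤ r := (Real.sqrt_nonneg _).trans hsqrt.le
  have htail := hconc f hf r hr_nonneg
  rw [hr, add_sub_cancel] at htail
  have hexp : -t ≤ -β * r ^ 2 / 2 := Real.exp_le_exp.1 <|
    (ENNReal.ofReal_le_ofReal_iff (Real.exp_pos _).le).1 (hmass.trans htail)
  have hsq : 2 * t / β < r ^ 2 := Real.lt_sq_of_sqrt_lt hsqrt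
  rw [div_lt_iff₀ hβ] at hsq
  linarith

end GaussianConcentration

section StdGaussian

variable {d : ℕ}

lemma lintegral_exp_neg_mul_norm_sq {E : Type*} [NormedAddCommGroup E] [InnerProductSpace ℝ E]
    [FiniteDimensional ℝ E] [MeasurableSpace E] [BorelSpace E] {b : ℝ} (hb : 0 < b) :
    ∫⁻ x : E, ENNReal.ofReal (Real.exp (-b * ‖x‖ ^ 2)) =
      ENNReal.ofReal ((π / b) ^ ((Module.finrank ℝ E : ℝ) / 2)) := by
  have hval := GaussianFourier.integral_rexp_neg_mul_sq_norm (V := E) hb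
  have hint : Integrable fun x : E => Real.exp (-b * ‖x‖ ^ 2) :=
    .of_integral_ne_zero (by rw [hval]; positivity)
  rw [← hval, ofReal_integral_eq_lintegral_ofReal hint (.of_forall fun _ => (Real.exp_pos _).le)]

lemma lintegral_exp_mul_norm_sq_stdGaussian {b : ℝ} (hb : b < 1 / 2) :
    ∫⁻ x, ENNReal.ofReal (Real.exp (b * ‖x‖ ^ 2)) ∂stdGaussian d =
      ENNReal.ofReal ((1 - 2 * b) ^ (-(d : ℝ) / 2)) := by
  have hb_pos : 0 < 1 - 2 * b := by linarith
  have hnormalization : (2 * π) ^ (-(d : ℝ) / 2) * (π / (1 / 2 - b)) ^ ((d : ℝ) / 2) =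
      (1 - 2 * b) ^ (-(d : ℝ) / 2) := by
    rw [show π / (1 / 2 - b) = 2 * π / (1 - 2 * b) by field_simp,
      Real.div_rpow (by positivity) hb_pos.le, neg_div, Real.rpow_neg (by positivity),
      Real.rpow_neg hb_pos.le]
    field_simp
  calc ∫⁻ x, ENNReal.ofReal (Real.exp (b * ‖x‖ ^ 2)) ∂stdGaussian d
      = ∫⁻ x : EuclideanSpace ℝ (Fin d), ENNReal.ofReal ((2 * π) ^ (-(d : ℝ) / 2)) *
          ENNReal.ofReal (Real.exp (-(1 / 2 - b) * ‖x‖ ^ 2)) := by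
        rw [stdGaussian, lintegral_withDensity_eq_lintegral_mul _ (by fun_prop) (by fun_prop)]
        refine lintegral_congr fun x => ?_
        rw [Pi.mul_apply, ENNReal.ofReal_mul (by positivity), mul_assoc,
          ← ENNReal.ofReal_mul (Real.exp_pos _).le, ← Real.exp_add]
        ring_nf
    _ = ENNReal.ofReal ((1 - 2 * b) ^ (-(d : ℝ) / 2)) := by
        rw [lintegral_const_mul _ (by fun_prop), lintegral_exp_neg_mul_norm_sq (by linarith),
          ← ENNReal.ofReal_mul (by positivity), finrank_euclideanSpace_fin, hnormalization]

instance isProbabilityMeasure_stdGaussian : IsProbabilityMeasure (stdGaussian d) where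
  measure_univ := by
    simpa using lintegral_exp_mul_norm_sq_stdGaussian (d := d) (b := 0) (by norm_num)

lemma stdGaussian_le_norm_le {b R : ℝ} (hb₀ : 0 ≤ b) (hb : b < 1 / 2) (hR : 0 ≤ R) :
    stdGaussian d {x | R ≤ ‖x‖} ≤
      ENNReal.ofReal ((1 - 2 * b) ^ (-(d : ℝ) / 2) * Real.exp (-b * R ^ 2)) := by
  calc stdGaussian d {x | R ≤ ‖x‖}
      ≤ stdGaussian d {x | ENNReal.ofReal (Real.exp (b * R ^ 2)) ≤
          ENNReal.ofReal (Real.exp (b * ‖x‖ ^ 2))} := by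
        refine measure_mono fun x (hx : R ≤ ‖x‖) => ENNReal.ofReal_le_ofReal ?_
        gcongr
    _ ≤ (∫⁻ x, ENNReal.ofReal (Real.exp (b * ‖x‖ ^ 2)) ∂stdGaussian d) /
          ENNReal.ofReal (Real.exp (b * R ^ 2)) :=
        meas_ge_le_lintegral_div (by fun_prop)
          (ENNReal.ofReal_pos.2 (Real.exp_pos _)).ne' ENNReal.ofReal_ne_top
    _ = ENNReal.ofReal ((1 - 2 * b) ^ (-(d : ℝ) / 2) * Real.exp (-b * R ^ 2)) := by
        rw [lintegral_exp_mul_norm_sq_stdGaussian hb, ← ENNReal.ofReal_div_of_pos (Real.exp_pos _),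
          neg_mul, Real.exp_neg, div_eq_mul_inv]

lemma half_le_stdGaussian_closedBall (hd : 0 < d) :
    ENNReal.ofReal (1 / 2) ≤ stdGaussian d (Metric.closedBall 0 √(5 * d)) := by
  have hd_one : (1 : ℝ) ≤ d := Nat.one_le_cast.2 hd
  have hbound : (1 - 2 * (1 / 4 : ℝ)) ^ (-(d : ℝ) / 2) * Real.exp (-(1 / 4) * √(5 * d) ^ 2) ≤
      1 / 2 := by
    calc (1 - 2 * (1 / 4 : ℝ)) ^ (-(d : ℝ) / 2) * Real.exp (-(1 / 4) * √(5 * d) ^ 2)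
        = Real.exp (Real.log 2 * (d / 2) + -(1 / 4) * (5 * d)) := by
          rw [Real.sq_sqrt (by positivity), Real.exp_add,
            show 1 - 2 * (1 / 4 : ℝ) = 2⁻¹ by norm_num, Real.rpow_def_of_pos (by norm_num),
            Real.log_inv]
          ring_nf
      _ ≤ Real.exp (-Real.log 2) := by
          gcongr
          nlinarith [Real.log_two_lt_d9]
      _ = 1 / 2 := by rw [Real.exp_neg, Real.exp_log two_pos, one_div]
  have hcompl : stdGaussian d (Metric.closedBall 0 √(5 * d))ᶜ ≤ ENNReal.ofReal (1 / 2) := by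
    calc stdGaussian d (Metric.closedBall 0 √(5 * d))ᶜ ≤ stdGaussian d {x | √(5 * d) ≤ ‖x‖} := by
          refine measure_mono fun x hx => ?_
          rw [Set.mem_compl_iff, mem_closedBall_zero_iff, not_le] at hx
          exact hx.le
      _ ≤ ENNReal.ofReal (1 / 2) :=
          (stdGaussian_le_norm_le (by norm_num) (by norm_num) (Real.sqrt_nonneg _)).trans
            (ENNReal.ofReal_le_ofReal hbound)
  rw [prob_compl_eq_one_sub measurableSet_closedBall, tsub_le_iff_left] at hcompl
  refine (ENNReal.add_le_add_iff_right (a := ENNReal.ofReal (1 / 2)) ENNReal.ofReal_ne_top).1 ?_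
  rwa [← ENNReal.ofReal_add (by norm_num) (by norm_num), add_halves, ENNReal.ofReal_one]

lemma exp_mul_stdGaussian_closedBall_le (a : EuclideanSpace ℝ (Fin d)) (ρ : ℝ) :
    ENNReal.ofReal (Real.exp (-‖a‖ ^ 2 - ρ ^ 2 / 2)) * stdGaussian d (Metric.closedBall 0 ρ) ≤
      stdGaussian d (Metric.closedBall a ρ) := by
  have hshift : stdGaussian d (Metric.closedBall a ρ) = ∫⁻ w in Metric.closedBall 0 ρ,
      ENNReal.ofReal ((2 * π) ^ (-(d : ℝ) / 2) * Real.exp (-‖w + a‖ ^ 2 / 2)) := by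
    rw [stdGaussian, withDensity_apply _ measurableSet_closedBall,
      ← (measurePreserving_add_right volume a).setLIntegral_comp_preimage
        measurableSet_closedBall (by fun_prop)]
    simp
  rw [hshift, stdGaussian, withDensity_apply _ measurableSet_closedBall,
    ← lintegral_const_mul' _ _ ENNReal.ofReal_ne_top]
  refine setLIntegral_mono' measurableSet_closedBall fun w hw => ?_
  have hw_sq : ‖w‖ ^ 2 ≤ ρ ^ 2 := by
    gcongr
    exact mem_closedBall_zero_iff.1 hw
  have hadd_sq : ‖w + a‖ ^ 2 ≤ 2 * (‖w‖ ^ 2 + ‖a‖ ^ 2) :=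
    (pow_le_pow_left₀ (norm_nonneg _) (norm_add_le w a) 2).trans add_sq_le
  rw [← ENNReal.ofReal_mul (Real.exp_pos _).le, mul_left_comm, ← Real.exp_add]
  gcongr
  linarith

lemma exp_le_stdGaussian_closedBall (hd : 0 < d) (a : EuclideanSpace ℝ (Fin d)) :
    ENNReal.ofReal (Real.exp (-(‖a‖ ^ 2 + 7 / 2 * d))) ≤
      stdGaussian d (Metric.closedBall a √(5 * d)) := by
  have hd_one : (1 : ℝ) ≤ d := Nat.one_le_cast.2 hd
  have hexp : Real.exp (-(‖a‖ ^ 2 + 7 / 2 * d)) ≤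
      Real.exp (-‖a‖ ^ 2 - √(5 * d) ^ 2 / 2) * (1 / 2) := by
    rw [Real.sq_sqrt (by positivity), ← Real.exp_log one_half_pos, ← Real.exp_add,
      one_div, Real.log_inv]
    gcongr
    linarith [Real.log_two_lt_d9]
  calc ENNReal.ofReal (Real.exp (-(‖a‖ ^ 2 + 7 / 2 * d)))
      ≤ ENNReal.ofReal (Real.exp (-‖a‖ ^ 2 - √(5 * d) ^ 2 / 2)) * ENNReal.ofReal (1 / 2) := by
        rw [← ENNReal.ofReal_mul (Real.exp_pos _).le]
        exact ENNReal.ofReal_le_ofReal hexp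
    _ ≤ ENNReal.ofReal (Real.exp (-‖a‖ ^ 2 - √(5 * d) ^ 2 / 2)) *
          stdGaussian d (Metric.closedBall 0 √(5 * d)) := by
        gcongr
        exact half_le_stdGaussian_closedBall hd
    _ ≤ stdGaussian d (Metric.closedBall a √(5 * d)) :=
        exp_mul_stdGaussian_closedBall_le a _

end StdGaussian

namespace IsBrenierPotential

variable {d : ℕ} {φ : EuclideanSpace ℝ (Fin d) → ℝ} {μ : Measure (EuclideanSpace ℝ (Fin d))}

lemma stdGaussian_preimage (hφ : IsBrenierPotential φ μ) {s : Set (EuclideanSpace ℝ (Fin d))}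
    (hs : MeasurableSet s) : stdGaussian d (gradient φ ⁻¹' s) = μ s := by
  rw [← hφ.2.2, Measure.map_apply (measurable_gradient φ) hs]

lemma norm_gradient_div_three_le (hφ : IsBrenierPotential φ μ) {x z : EuclideanSpace ℝ (Fin d)}
    {ρ : ℝ} (hρ : 0 < ρ)
    (hz : z ∈ Metric.closedBall (x + (2 * ρ * ‖gradient φ x‖⁻¹) • gradient φ x) ρ) :
    ‖gradient φ x‖ / 3 ≤ ‖gradient φ z‖ := by
  obtain ⟨hconv, hdiff, -⟩ := hφ
  have hmono : ⟪gradient φ x, z - x⟫ ≤ ⟪gradient φ z, z - x⟫ :=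
    inner_gradient_le_inner_gradient_of_convexOn hconv (Set.mem_univ x) (Set.mem_univ z)
      (hdiff x) (hdiff z)
  have hscaled := mul_norm_le_mul_norm_of_mem_closedBall (by positivity) hmono hz
  refine le_of_mul_le_mul_left ?_ hρ
  linarith

lemma exp_le_measure_norm_gradient_div_three_le (hφ : IsBrenierPotential φ μ) (hd : 0 < d)
    (x : EuclideanSpace ℝ (Fin d)) :
    ENNReal.ofReal (Real.exp (-(2 * ‖x‖ ^ 2 + 87 / 2 * d))) ≤
      μ {w | ‖gradient φ x‖ / 3 ≤ ‖w‖} := by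
  set ρ := √(5 * d)
  set v := (2 * ρ * ‖gradient φ x‖⁻¹) • gradient φ x with hv
  have hρ_pos : 0 < ρ := Real.sqrt_pos.2 (by positivity)
  have hρ_sq : ρ ^ 2 = 5 * d := Real.sq_sqrt (by positivity)
  have hv_norm : ‖v‖ ≤ 2 * ρ := by
    rw [hv, norm_smul, Real.norm_of_nonneg (by positivity), mul_assoc]
    exact mul_le_of_le_one_right (by positivity) inv_mul_le_one
  have hcenter : ‖x + v‖ ^ 2 ≤ 2 * ‖x‖ ^ 2 + 40 * d := by
    calc ‖x + v‖ ^ 2 ≤ (‖x‖ + 2 * ρ) ^ 2 := by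
          gcongr
          exact (norm_add_le _ _).trans (by gcongr)
      _ ≤ 2 * (‖x‖ ^ 2 + (2 * ρ) ^ 2) := add_sq_le
      _ = 2 * ‖x‖ ^ 2 + 40 * d := by rw [mul_pow, hρ_sq]; ring
  calc ENNReal.ofReal (Real.exp (-(2 * ‖x‖ ^ 2 + 87 / 2 * d)))
      ≤ ENNReal.ofReal (Real.exp (-(‖x + v‖ ^ 2 + 7 / 2 * d))) := by
        gcongr ENNReal.ofReal (Real.exp (-?_))
        linarith
    _ ≤ stdGaussian d (Metric.closedBall (x + v) ρ) := exp_le_stdGaussian_closedBall hd _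
    _ ≤ stdGaussian d (gradient φ ⁻¹' {w | ‖gradient φ x‖ / 3 ≤ ‖w‖}) :=
        measure_mono fun z hz => hφ.norm_gradient_div_three_le hρ_pos hz
    _ = μ {w | ‖gradient φ x‖ / 3 ≤ ‖w‖} :=
        hφ.stdGaussian_preimage (measurableSet_le measurable_const measurable_norm)

end IsBrenierPotential

lemma sqrt_div_le_mul_rpow_mul_sqrt {A B β c : ℝ} (hβ : 0 ≤ β) (hc : 0 ≤ c)
    (hAB : A ≤ c ^ 2 * B) : √(A / β) ≤ c * β ^ (-(1 : ℝ) / 2) * √B := by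
  calc √(A / β) ≤ √(c ^ 2 * B) / √β := by
        rw [Real.sqrt_div' _ hβ]
        gcongr
    _ = c * β ^ (-(1 : ℝ) / 2) * √B := by
        rw [Real.sqrt_mul (sq_nonneg c), Real.sqrt_sq hc, neg_div, Real.rpow_neg hβ,
          ← Real.sqrt_eq_rpow]
        ring

/-- If `μ` is a centered probability measure on `ℝ^d` satisfying Gaussian concentration
with constant `β > 0` and `T = ∇φ` is a Brenier map sending the standard Gaussian onto `μ`,
then `|T(x)| ≤ 12 β^{-1/2} √(|x|² + 17 d)` for every `x`. -/
theorem statement_1 {d : ℕ} (μ : Measure (EuclideanSpace ℝ (Fin d)))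
    [IsProbabilityMeasure μ] (hcent : IsCentered μ) (β : ℝ) (hβ : 0 < β)
    (hconc : GaussianConcentration μ β)
    (φ : EuclideanSpace ℝ (Fin d) → ℝ) (hφ : IsBrenierPotential φ μ)
    (x : EuclideanSpace ℝ (Fin d)) :
    ‖gradient φ x‖ ≤ 12 * β ^ (-(1 : ℝ) / 2) * Real.sqrt (‖x‖ ^ 2 + 17 * d) := by
  obtain rfl | hd := Nat.eq_zero_or_pos d
  · rw [Subsingleton.elim (gradient φ x) 0, norm_zero]
    positivity
  have htail : ‖gradient φ x‖ / 3 ≤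
      (∫ w, ‖w‖ ∂μ) + √(2 * (2 * ‖x‖ ^ 2 + 87 / 2 * d) / β) :=
    hconc.le_integral_add_sqrt_of_exp_le_measure hβ lipschitzWith_one_norm
      (hφ.exp_le_measure_norm_gradient_div_three_le hd x)
  have hmean : ∫ w, ‖w‖ ∂μ ≤ 1 * β ^ (-(1 : ℝ) / 2) * √(‖x‖ ^ 2 + 17 * d) :=
    (hconc.integral_norm_le hβ hcent).trans
      (sqrt_div_le_mul_rpow_mul_sqrt hβ.le zero_le_one (by nlinarith [sq_nonneg ‖x‖]))
  have hdev : √(2 * (2 * ‖x‖ ^ 2 + 87 / 2 * d) / β) ≤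
      3 * β ^ (-(1 : ℝ) / 2) * √(‖x‖ ^ 2 + 17 * d) :=
    sqrt_div_le_mul_rpow_mul_sqrt hβ.le zero_le_three (by nlinarith [sq_nonneg ‖x‖])
  linarith
end
end
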